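/- Let K₁, K₂ be p-adic local fields with K = K₁ ∩ K₂, such that K₁/K and K₂/K are Galois, K₁K₂/K is totally ramified, and each of the extensions K₁/K, K₂/K, K₁K₂/K₂, K₁K₂/K₁ has a unique ramification jump, denoted t₁, t₂, t₁', t₂' respectively. With d_i = [K_i : K], one has d₂(d₁−1)t₁ + (d₂−1)t₂' = d₁(d₂−1)t₂ + (d₁−1)t₁'. -/

import Mathlib

/-- The `ℤ_[p]`-algebra structure on a field `L` over `ℚ_[p]`. -/
noncomputable def padicIntAlgebra (p : ℕ) [Fact p.Prime] (L : Type*) [Field L]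
    [Algebra ℚ_[p] L] : Algebra ℤ_[p] L :=
  ((algebraMap ℚ_[p] L).comp (algebraMap ℤ_[p] ℚ_[p])).toAlgebra

/-- The ring of integers of a `p`-adic field `L`, i.e. the integral closure of `ℤ_[p]` in `L`. -/
noncomputable def ringOfInt (p : ℕ) [Fact p.Prime] (L : Type*) [Field L]
    [Algebra ℚ_[p] L] : Subring L :=
  letI := padicIntAlgebra p L
  (integralClosure ℤ_[p] L).toSubring

/-- The maximal ideal of the ring of integers of `L` (its Jacobson radical). -/
noncomputable def maxIdeal (p : ℕ) [Fact p.Prime] (L : Type*) [Field L]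
    [Algebra ℚ_[p] L] : Ideal (ringOfInt p L) :=
  (⊥ : Ideal (ringOfInt p L)).jacobson

/-- The `i`-th ramification group (in lower numbering) of `L/K`, as a subset of `Gal(L/K)`:
`σ ∈ G_i` iff `σ x - x ∈ 𝔭_L ^ (i+1)` for every `x` in the ring of integers of `L`. -/
noncomputable def ramSet (p : ℕ) [Fact p.Prime] (K L : Type*) [Field K] [Field L]
    [Algebra ℚ_[p] L] [Algebra K L] (i : ℕ) : Set (L ≃ₐ[K] L) :=
  {σ | ∀ x : ringOfInt p L, ∃ y ∈ maxIdeal p L ^ (i + 1), (y : L) = σ (x : L) - (x : L)}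

/-- `t` is a ramification jump of `L/K` if `G_t ≠ G_{t+1}`. -/
noncomputable def IsRamJump (p : ℕ) [Fact p.Prime] (K L : Type*) [Field K] [Field L]
    [Algebra ℚ_[p] L] [Algebra K L] (t : ℕ) : Prop :=
  ramSet p K L t ≠ ramSet p K L (t + 1)

/-- `L/K` has a unique ramification jump, equal to `t`. -/
noncomputable def HasUniqueRamJump (p : ℕ) [Fact p.Prime] (K L : Type*) [Field K] [Field L]
    [Algebra ℚ_[p] L] [Algebra K L] (t : ℕ) : Prop :=
  IsRamJump p K L t ∧ ∀ t', IsRamJump p K L t' → t' = t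

/-- Same as `HasUniqueRamJump`, with the `K`-algebra structure on `L` given by an
explicit ring homomorphism. -/
noncomputable def HasUniqueRamJumpHom (p : ℕ) [Fact p.Prime] (K L : Type*) [Field K] [Field L]
    [Algebra ℚ_[p] L] (f : K →+* L) (t : ℕ) : Prop :=
  letI := f.toAlgebra
  HasUniqueRamJump p K L t

/-- The absolute ramification index `e(L|ℚ_p)`, i.e. the valuation of `p` in `L`. -/
noncomputable def eAbs (p : ℕ) [Fact p.Prime] (L : Type*) [Field L] [Algebra ℚ_[p] L] : ℕ :=
  sSup {n : ℕ | Ideal.span {(p : ringOfInt p L)} ≤ maxIdeal p L ^ n}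

/-- The normalized valuation `v_L(x)` of an integral element `x` of `L`. -/
noncomputable def valInt (p : ℕ) [Fact p.Prime] (L : Type*) [Field L] [Algebra ℚ_[p] L]
    (x : L) : ℕ :=
  sSup {n : ℕ | ∃ y ∈ maxIdeal p L ^ n, (y : L) = x}

/-!
Compute the exponent of the different of `K₁K₂/K` through `K₁` and through `K₂`, and compare. In a
totally ramified Galois extension of degree `d`, a uniformizer generates the ring of integers, so
the different is the product over `σ ≠ 1` of the ideals generated by `ϖ - σ ϖ`. If `t` is the only
jump, then all nontrivial `σ` lie in `G_t` but not in `G_{t+1}`, so every factor is `𝔭 ^ (t + 1)`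
and the exponent is `(d - 1)(t + 1)`. Multiplicativity of differents in towers does the rest.
-/

section GaloisGroup

open Polynomial

variable {R S G : Type*} [CommRing R] [CommRing S] [Algebra R S] [Group G]
  [MulSemiringAction G S]

theorem eval_derivative_charpoly_self [Fintype G] [DecidableEq G] (x : S) :
    (derivative (MulSemiringAction.charpoly G x)).eval x =
      ∏ g ∈ Finset.univ.erase (1 : G), (x - g • x) := by
  rw [MulSemiringAction.charpoly_eq, ← Finset.mul_prod_erase _ _ (Finset.mem_univ (1 : G))]
  simp [derivative_mul, eval_prod]

section SMulCommClass

variable [SMulCommClass G R S] {x : S} (hx : Algebra.adjoin R {x} = ⊤)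
include hx

theorem smul_sub_mem_span_of_adjoin_eq_top (g : G) (b : S) :
    g • b - b ∈ Ideal.span {g • x - x} := by
  obtain ⟨f, rfl⟩ : b ∈ (aeval (R := R) x).range := by
    rw [← Algebra.adjoin_singleton_eq_range_aeval, hx]
    exact Algebra.mem_top
  change g • aeval x f - aeval x f ∈ _
  rw [Ideal.mem_span_singleton, ← aeval_smul, ← eval_map_algebraMap, ← eval_map_algebraMap]
  exact sub_dvd_eval_sub _ _ _

theorem mem_inertia_iff_of_adjoin_eq_top (I : Ideal S) (g : G) :
    g ∈ I.inertia G ↔ g • x - x ∈ I :=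
  ⟨fun hg ↦ hg x, fun hg b ↦ (Ideal.span_singleton_le_iff_mem I).mpr hg
    (smul_sub_mem_span_of_adjoin_eq_top hx g b)⟩

theorem smul_left_injective_of_adjoin_eq_top [FaithfulSMul G S] :
    Function.Injective fun g : G ↦ g • x := by
  intro g h hgh
  have hbot : h⁻¹ * g ∈ (⊥ : Ideal S).inertia G := by
    rw [mem_inertia_iff_of_adjoin_eq_top hx, Ideal.mem_bot, mul_smul, sub_eq_zero,
      inv_smul_eq_iff]
    exact hgh
  refine (inv_mul_eq_one.mp (FaithfulSMul.eq_of_smul_eq_smul fun b : S ↦ ?_)).symm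
  rw [one_smul]
  exact sub_eq_zero.mp (hbot b)

end SMulCommClass

theorem map_minpoly_eq_charpoly_of_adjoin_eq_top [IsDomain R] [IsIntegrallyClosed R] [IsDomain S]
    [Module.IsTorsionFree R S] [Fintype G] [IsGaloisGroup G R S] {x : S}
    (hx : Algebra.adjoin R {x} = ⊤) :
    (minpoly R x).map (algebraMap R S) = MulSemiringAction.charpoly G x := by
  have := IsGaloisGroup.faithful (G := G) (A := R) (B := S)
  obtain ⟨q, hq, -, hmonic⟩ := lifts_and_natDegree_eq_and_monic
    (Algebra.IsInvariant.charpoly_mem_lifts R S G x) (MulSemiringAction.monic_charpoly G x)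
  have hqx : aeval x q = 0 := by
    rw [← eval_map_algebraMap, hq, MulSemiringAction.eval_charpoly]
  have hmin : ((minpoly R x).map (algebraMap R S)).Monic := (minpoly.monic ⟨q, hmonic, hqx⟩).map _
  refine (eq_of_monic_of_dvd_of_natDegree_le hmin (MulSemiringAction.monic_charpoly G x) ?_ ?_).symm
  · exact hq ▸ Polynomial.map_dvd _ (minpoly.isIntegrallyClosed_dvd ⟨q, hmonic, hqx⟩ hqx)
  · let conjugates : Finset S :=
      Finset.univ.map ⟨fun g : G ↦ g • x, smul_left_injective_of_adjoin_eq_top hx⟩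
    have hroots : conjugates.val ⊆ ((minpoly R x).map (algebraMap R S)).roots := by
      intro y hy
      obtain ⟨g, -, rfl⟩ := Finset.mem_map.mp hy
      change g • x ∈ _
      rw [mem_roots hmin.ne_zero, IsRoot, eval_map_algebraMap, aeval_smul, minpoly.aeval, smul_zero]
    simpa [conjugates, MulSemiringAction.charpoly_eq] using card_le_degree_of_subset_roots hroots

theorem aeval_derivative_minpoly_of_adjoin_eq_top [IsDomain R] [IsIntegrallyClosed R] [IsDomain S]
    [Module.IsTorsionFree R S] [Fintype G] [DecidableEq G] [IsGaloisGroup G R S] {x : S}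
    (hx : Algebra.adjoin R {x} = ⊤) :
    aeval x (derivative (minpoly R x)) = ∏ g ∈ Finset.univ.erase (1 : G), (x - g • x) := by
  rw [← eval_map_algebraMap, ← derivative_map, map_minpoly_eq_charpoly_of_adjoin_eq_top (G := G) hx,
    eval_derivative_charpoly_self]

theorem adjoin_algebraMap_eq_top_of_isFractionRing (K L : Type*) [Field K] [Field L] [Algebra R K]
    [Algebra S L] [IsFractionRing S L] [Algebra K L] [Algebra R L] [IsScalarTower R K L]
    [IsScalarTower R S L] [Algebra.IsAlgebraic K L] {x : S} (hx : Algebra.adjoin R {x} = ⊤) :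
    Algebra.adjoin K {algebraMap S L x} = ⊤ := by
  have hS (s : S) : algebraMap S L s ∈ Algebra.adjoin K {algebraMap S L x} := by
    obtain ⟨f, rfl⟩ : s ∈ (aeval (R := R) x).range := by
      rw [← Algebra.adjoin_singleton_eq_range_aeval, hx]
      exact Algebra.mem_top
    change algebraMap S L (aeval x f) ∈ _
    rw [← aeval_algebraMap_apply, ← aeval_map_algebraMap K]
    exact aeval_mem_adjoin_singleton K _
  refine eq_top_iff.mpr fun y _ ↦ ?_
  obtain ⟨s, t, -, rfl⟩ := IsFractionRing.div_surjective (A := S) y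
  rw [div_eq_mul_inv]
  exact mul_mem (hS s) (Subalgebra.inv_mem_of_algebraic _ (x := ⟨_, hS t⟩)
      (Algebra.IsAlgebraic.isAlgebraic (R := K) (algebraMap S L t)))

theorem differentIdeal_eq_prod_span_of_adjoin_eq_top [IsDedekindDomain R] [IsDedekindDomain S]
    [Module.IsTorsionFree R S] [Module.Finite R S] [Fintype G] [DecidableEq G]
    [IsGaloisGroup G R S] {x : S} (hx : Algebra.adjoin R {x} = ⊤) :
    differentIdeal R S = ∏ g ∈ Finset.univ.erase (1 : G), Ideal.span {x - g • x} := by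
  let := FractionRing.liftAlgebra R (FractionRing S)
  let := IsFractionRing.mulSemiringAction G S (FractionRing S)
  have := IsGaloisGroup.isGalois G (FractionRing R) (FractionRing S)
  have := IsGaloisGroup.finiteDimensional G (FractionRing R) (FractionRing S)
  have hconductor := conductor_mul_differentIdeal R (FractionRing R) (FractionRing S) x
    (adjoin_algebraMap_eq_top_of_isFractionRing _ _ hx)
  rwa [conductor_eq_top_of_adjoin_eq_top hx, Ideal.top_mul,
    aeval_derivative_minpoly_of_adjoin_eq_top (G := G) hx, ← Ideal.prod_span_singleton]
    at hconductor

end GaloisGroup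

section DiscreteValuationRing

open IsLocalRing

/-- A finite extension `B/A` of discrete valuation rings is totally ramified if its ramification
index is as large as possible, namely equal to its degree. -/
def IsTotallyRamified (A B : Type*) [CommRing A] [CommRing B] [IsLocalRing B] [Algebra A B] :
    Prop :=
  (maximalIdeal B).ramificationIdx A = Module.finrank A B

variable (A B : Type*) [CommRing A] [CommRing B] [IsDomain B] [IsDiscreteValuationRing B]

theorem maximalIdeal_pow_strictAnti : StrictAnti fun n : ℕ ↦ maximalIdeal B ^ n :=
  Ideal.pow_right_strictAnti _ (IsDiscreteValuationRing.not_a_field B) Ideal.IsPrime.ne_top'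

variable {B} in
theorem exists_eq_maximalIdeal_pow {I : Ideal B} (hI : I ≠ ⊥) : ∃ n, I = maximalIdeal B ^ n :=
  exists_maximalIdeal_pow_eq_of_principal B (IsPrincipalIdealRing.principal _) I hI

variable [IsDomain A] [IsDiscreteValuationRing A] [Algebra A B] [FaithfulSMul A B]
  [Module.Finite A B]

theorem map_maximalIdeal_eq_pow_ramificationIdx :
    (maximalIdeal A).map (algebraMap A B) =
      maximalIdeal B ^ (maximalIdeal B).ramificationIdx A := by
  have hA := IsDiscreteValuationRing.not_a_field A
  obtain ⟨e, he⟩ := exists_eq_maximalIdeal_pow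
    (mt (Ideal.map_eq_bot_iff_of_injective (FaithfulSMul.algebraMap_injective A B)).mp hA)
  have hle (n : ℕ) : (maximalIdeal A).map (algebraMap A B) ≤ maximalIdeal B ^ n ↔ n ≤ e := by
    rw [he, (maximalIdeal_pow_strictAnti B).le_iff_ge]
  rw [he, ← Ideal.ramificationIdx'_eq_ramificationIdx (maximalIdeal A) (maximalIdeal B) hA,
    Ideal.ramificationIdx'_spec ((hle e).mpr le_rfl) (by simp [hle])]

theorem ramificationIdx_mul_inertiaDeg_eq_finrank :
    (maximalIdeal B).ramificationIdx A * (maximalIdeal B).inertiaDeg A = Module.finrank A B := by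
  have hprimes :=
    IsLocalRing.primesOver_eq (R := A) B (IsDiscreteValuationRing.not_a_field A)
  let : Unique ((maximalIdeal A).primesOver B) := hprimes ▸ Set.uniqueSingleton _
  have hdefault : ((default : (maximalIdeal A).primesOver B) : Ideal B) = maximalIdeal B :=
    hprimes.subset (Subtype.coe_prop _)
  rw [← Ideal.sum_ramification_inertia_eq_finrank (maximalIdeal A) B, Fintype.sum_unique,
    hdefault]

theorem ramificationIdx_le_finrank :
    (maximalIdeal B).ramificationIdx A ≤ Module.finrank A B :=
  Nat.le_of_dvd Module.finrank_pos ⟨_, (ramificationIdx_mul_inertiaDeg_eq_finrank A B).symm⟩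

namespace IsTotallyRamified

variable {A B}

theorem map_maximalIdeal_eq_pow (h : IsTotallyRamified A B) :
    (maximalIdeal A).map (algebraMap A B) = maximalIdeal B ^ Module.finrank A B := by
  rw [map_maximalIdeal_eq_pow_ramificationIdx, h]

theorem inertiaDeg_eq_one (h : IsTotallyRamified A B) : (maximalIdeal B).inertiaDeg A = 1 := by
  have hef := ramificationIdx_mul_inertiaDeg_eq_finrank A B
  rw [h] at hef
  exact (Nat.mul_eq_left Module.finrank_pos.ne').mp hef

theorem exists_sub_algebraMap_mem_maximalIdeal (h : IsTotallyRamified A B) (b : B) :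
    ∃ a : A, b - algebraMap A B a ∈ maximalIdeal B := by
  let : Field (A ⧸ maximalIdeal A) := Ideal.Quotient.field _
  have hone := h.inertiaDeg_eq_one
  rw [Ideal.inertiaDeg_eq_of_isMaximal (maximalIdeal A)] at hone
  obtain ⟨c, hc⟩ := (finrank_eq_one_iff_of_nonzero' (1 : B ⧸ maximalIdeal B)
    one_ne_zero).mp hone (Ideal.Quotient.mk _ b)
  obtain ⟨a, rfl⟩ := Ideal.Quotient.mk_surjective c
  refine ⟨a, ?_⟩
  rw [← Ideal.Quotient.eq, ← hc, Algebra.smul_def, mul_one]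
  rfl

theorem exists_mem_adjoin_sub_mem_pow (h : IsTotallyRamified A B) {ϖ : B} (hϖ : Irreducible ϖ)
    (k : ℕ) (b : B) : ∃ c ∈ Algebra.adjoin A {ϖ}, b - c ∈ maximalIdeal B ^ k := by
  induction k generalizing b with
  | zero => exact ⟨0, zero_mem _, by simp⟩
  | succ k ih =>
    obtain ⟨a, ha⟩ := h.exists_sub_algebraMap_mem_maximalIdeal b
    rw [hϖ.maximalIdeal_eq, Ideal.mem_span_singleton'] at ha
    obtain ⟨b', hb'⟩ := ha
    obtain ⟨c, hc, hbc⟩ := ih b'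
    refine ⟨algebraMap A B a + c * ϖ, add_mem (Subalgebra.algebraMap_mem _ a)
      (mul_mem hc (Algebra.self_mem_adjoin_singleton A ϖ)), ?_⟩
    have hsub : b - (algebraMap A B a + c * ϖ) = (b' - c) * ϖ := by linear_combination -hb'
    rw [hsub, pow_succ]
    exact Ideal.mul_mem_mul hbc ((mem_maximalIdeal ϖ).mpr hϖ.not_isUnit)

theorem adjoin_irreducible_eq_top (h : IsTotallyRamified A B) {ϖ : B} (hϖ : Irreducible ϖ) :
    Algebra.adjoin A {ϖ} = ⊤ := by
  rw [← Algebra.toSubmodule_eq_top, eq_top_iff]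
  refine Submodule.le_of_le_smul_of_le_jacobson_bot Module.Finite.fg_top
    (maximalIdeal_le_jacobson ⊥) fun b _ ↦ ?_
  obtain ⟨c, hc, hbc⟩ := h.exists_mem_adjoin_sub_mem_pow hϖ (Module.finrank A B) b
  rw [Ideal.smul_top_eq_map, h.map_maximalIdeal_eq_pow]
  exact Submodule.mem_sup.mpr ⟨c, hc, b - c, hbc, add_sub_cancel c b⟩

end IsTotallyRamified

section Tower

variable {A B} {C : Type*} [CommRing C] [IsDomain C] [IsDiscreteValuationRing C] [Algebra A C]
  [Algebra B C] [FaithfulSMul B C] [Module.Finite B C]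
  [IsScalarTower A B C]

theorem IsTotallyRamified.bot_and_top (h : IsTotallyRamified A C) :
    IsTotallyRamified A B ∧ IsTotallyRamified B C := by
  have hmul : (maximalIdeal B).ramificationIdx A * (maximalIdeal C).ramificationIdx B =
      Module.finrank A B * Module.finrank B C := by
    rw [Module.finrank_mul_finrank, ← Ideal.ramificationIdx_tower]
    exact h
  exact (mul_eq_mul_iff_eq_and_eq_of_pos (ramificationIdx_le_finrank A B)
    (ramificationIdx_le_finrank B C) (Ideal.ramificationIdx_pos _ _) Module.finrank_pos).mp hmul

end Tower

end DiscreteValuationRing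

section LowerRamificationGroup

open IsLocalRing

section

variable (G B : Type*) [CommRing B] [IsLocalRing B] [Group G] [MulSemiringAction G B]

/-- The `i`-th ramification group, in lower numbering, of a group `G` acting on a local ring `B`:
the elements of `G` acting trivially modulo the `(i + 1)`-st power of the maximal ideal. -/
def lowerRamificationGroup (i : ℕ) : Subgroup G :=
  (maximalIdeal B ^ (i + 1)).inertia G

theorem lowerRamificationGroup_antitone : Antitone (lowerRamificationGroup G B) :=
  fun _ _ hij _ hg b ↦ Ideal.pow_le_pow_right (Nat.succ_le_succ hij) (hg b)

theorem iInf_lowerRamificationGroup_eq_bot [IsDomain B] [IsNoetherianRing B] [FaithfulSMul G B] :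
    ⨅ i, lowerRamificationGroup G B i = ⊥ := by
  refine eq_bot_iff.mpr fun g hg ↦ FaithfulSMul.eq_of_smul_eq_smul fun b : B ↦ ?_
  rw [one_smul, ← sub_eq_zero, ← Ideal.mem_bot,
    ← Ideal.iInf_pow_eq_bot_of_isDomain (maximalIdeal B) Ideal.IsPrime.ne_top', Submodule.mem_iInf]
  exact fun i ↦ Ideal.pow_le_pow_right i.le_succ (Subgroup.mem_iInf.mp hg i b)

end

variable {G A B : Type*} [CommRing B] [IsDomain B] [Group G] [MulSemiringAction G B]

theorem lowerRamificationGroup_succ_eq_bot [IsLocalRing B] [IsNoetherianRing B] [FaithfulSMul G B]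
    {t : ℕ}
    (ht : ∀ i ≠ t, lowerRamificationGroup G B i = lowerRamificationGroup G B (i + 1)) :
    lowerRamificationGroup G B (t + 1) = ⊥ := by
  rw [← iInf_lowerRamificationGroup_eq_bot G B]
  refine le_antisymm (le_iInf fun i ↦ ?_) (iInf_le _ _)
  rcases le_total i (t + 1) with hi | hi
  · exact lowerRamificationGroup_antitone G B hi
  · induction i, hi using Nat.le_induction with
    | base => exact le_rfl
    | succ i hi ih => exact ih.trans (ht i (by lia)).le

variable [IsDiscreteValuationRing B] [CommRing A] [IsDomain A] [IsDiscreteValuationRing A]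
  [Algebra A B] [Module.Finite A B] [FaithfulSMul A B]

theorem IsTotallyRamified.lowerRamificationGroup_zero [SMulCommClass G A B]
    (h : IsTotallyRamified A B) : lowerRamificationGroup G B 0 = ⊤ := by
  refine eq_top_iff.mpr fun g _ b ↦ ?_
  obtain ⟨a, ha⟩ := h.exists_sub_algebraMap_mem_maximalIdeal b
  have hga : g • (b - algebraMap A B a) ∈ maximalIdeal B := by
    rwa [mem_maximalIdeal, mem_nonunits_iff, ← MulSemiringAction.toRingEquiv_apply_apply,
      isUnit_map_iff]
  have hsub : g • b - b = g • (b - algebraMap A B a) - (b - algebraMap A B a) := by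
    rw [smul_sub, smul_algebraMap]
    ring
  change g • b - b ∈ maximalIdeal B ^ (0 + 1)
  rw [zero_add, pow_one, hsub]
  exact sub_mem hga ha

theorem IsTotallyRamified.lowerRamificationGroup_eq_top [SMulCommClass G A B]
    (h : IsTotallyRamified A B) {t : ℕ}
    (ht : ∀ i ≠ t, lowerRamificationGroup G B i = lowerRamificationGroup G B (i + 1)) :
    lowerRamificationGroup G B t = ⊤ := by
  have hle (i : ℕ) (hi : i ≤ t) : lowerRamificationGroup G B i = ⊤ := by
    induction i with
    | zero => exact h.lowerRamificationGroup_zero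
    | succ i ih => rw [← ht i (by lia), ih (by lia)]
  exact hle t le_rfl

omit [IsDomain A] [IsDiscreteValuationRing A] [Module.Finite A B] [FaithfulSMul A B] in
theorem span_sub_smul_eq_maximalIdeal_pow [SMulCommClass G A B] {x : B}
    (hx : Algebra.adjoin A {x} = ⊤) {g : G} {i : ℕ} (hg : g ∈ lowerRamificationGroup G B i)
    (hg' : g ∉ lowerRamificationGroup G B (i + 1)) :
    Ideal.span {x - g • x} = maximalIdeal B ^ (i + 1) := by
  rw [← neg_sub, Ideal.span_singleton_neg]
  rw [lowerRamificationGroup, mem_inertia_iff_of_adjoin_eq_top hx,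
    ← Ideal.span_singleton_le_iff_mem] at hg hg'
  have hne : Ideal.span {g • x - x} ≠ ⊥ := fun hbot ↦ hg' (hbot.trans_le bot_le)
  obtain ⟨n, hn⟩ := exists_eq_maximalIdeal_pow hne
  rw [hn, (maximalIdeal_pow_strictAnti B).le_iff_ge] at hg hg'
  rw [hn, show n = i + 1 by lia]

theorem IsTotallyRamified.differentIdeal_eq_pow (h : IsTotallyRamified A B)
    [IsGaloisGroup G A B] {t : ℕ}
    (ht : ∀ i ≠ t, lowerRamificationGroup G B i = lowerRamificationGroup G B (i + 1)) :
    differentIdeal A B = maximalIdeal B ^ ((Nat.card G - 1) * (t + 1)) := by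
  classical
  have := IsGaloisGroup.finite (G := G) A B
  let := Fintype.ofFinite G
  have := IsGaloisGroup.faithful (G := G) (A := A) (B := B)
  obtain ⟨ϖ, hϖ⟩ := IsDiscreteValuationRing.exists_irreducible B
  have hadjoin := h.adjoin_irreducible_eq_top hϖ
  have hspan (g : G) (hg : g ∈ Finset.univ.erase 1) :
      Ideal.span {ϖ - g • ϖ} = maximalIdeal B ^ (t + 1) := by
    refine span_sub_smul_eq_maximalIdeal_pow hadjoin ?_ ?_
    · exact h.lowerRamificationGroup_eq_top ht ▸ Subgroup.mem_top g
    · rw [lowerRamificationGroup_succ_eq_bot ht, Subgroup.mem_bot]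
      exact Finset.ne_of_mem_erase hg
  rw [differentIdeal_eq_prod_span_of_adjoin_eq_top (G := G) hadjoin, Finset.prod_congr rfl hspan,
    Finset.prod_const, Finset.card_erase_of_mem (Finset.mem_univ _), Finset.card_univ,
    ← Nat.card_eq_fintype_card, ← pow_mul, mul_comm]

theorem IsTotallyRamified.differentIdeal_eq_pow_of_tower {C H : Type*} [CommRing C] [IsDomain C]
    [IsDiscreteValuationRing C] [Algebra A C] [FaithfulSMul A C] [Algebra B C]
    [FaithfulSMul B C] [Module.Finite B C] [IsScalarTower A B C] (h : IsTotallyRamified A C)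
    [IsGaloisGroup G A B] [Group H] [MulSemiringAction H C] [IsGaloisGroup H B C] {t t' : ℕ}
    (ht : ∀ i ≠ t, lowerRamificationGroup G B i = lowerRamificationGroup G B (i + 1))
    (ht' : ∀ i ≠ t', lowerRamificationGroup H C i = lowerRamificationGroup H C (i + 1)) :
    differentIdeal A C = maximalIdeal C ^
      ((Nat.card H - 1) * (t' + 1) + Nat.card H * ((Nat.card G - 1) * (t + 1))) := by
  have : Module.Finite A C := .trans B C
  have := IsGaloisGroup.finite (G := G) A B
  have := IsGaloisGroup.finite (G := H) B C
  obtain ⟨hAB, hBC⟩ := h.bot_and_top (B := B)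
  let := FractionRing.liftAlgebra A (FractionRing B)
  let := FractionRing.liftAlgebra B (FractionRing C)
  let := FractionRing.liftAlgebra A (FractionRing C)
  let := IsFractionRing.mulSemiringAction G B (FractionRing B)
  let := IsFractionRing.mulSemiringAction H C (FractionRing C)
  have := IsGaloisGroup.isGalois G (FractionRing A) (FractionRing B)
  have := IsGaloisGroup.isGalois H (FractionRing B) (FractionRing C)
  have : Algebra.IsSeparable (FractionRing A) (FractionRing C) :=
    .trans (FractionRing A) (FractionRing B) (FractionRing C)
  rw [differentIdeal_eq_differentIdeal_mul_differentIdeal A B C, hAB.differentIdeal_eq_pow ht,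
    hBC.differentIdeal_eq_pow ht', Ideal.map_pow, hBC.map_maximalIdeal_eq_pow, ← pow_mul, ← pow_add,
    IsGaloisGroup.card_eq_finrank' H B C]

end LowerRamificationGroup

section RingOfInt

open IsLocalRing Polynomial

variable (p : ℕ) [Fact p.Prime] (K L : Type*) [Field K] [Field L] [Algebra ℚ_[p] K]
  [Algebra ℚ_[p] L]

noncomputable local instance : Algebra ℤ_[p] L := padicIntAlgebra p L

instance : IsScalarTower ℤ_[p] ℚ_[p] L :=
  .of_algebraMap_eq fun _ ↦ rfl

noncomputable instance : Algebra ℤ_[p] (ringOfInt p L) :=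
  (integralClosure ℤ_[p] L).algebra

instance : IsScalarTower ℤ_[p] (ringOfInt p L) L :=
  .of_algebraMap_eq fun _ ↦ rfl

instance : IsIntegralClosure (ringOfInt p L) ℤ_[p] L :=
  integralClosure.isIntegralClosure ℤ_[p] L

instance : Algebra.IsIntegral ℤ_[p] (ringOfInt p L) :=
  IsIntegralClosure.isIntegral_algebra ℤ_[p] L

instance : CharZero (ringOfInt p L) :=
  have : CharZero L := charZero_of_injective_algebraMap (algebraMap ℚ_[p] L).injective
  inferInstance

variable {L} in
theorem mem_ringOfInt_iff_spectralNorm_le_one [Algebra.IsAlgebraic ℚ_[p] L] {x : L} :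
    x ∈ ringOfInt p L ↔ spectralNorm ℚ_[p] L x ≤ 1 := by
  have hmonic := minpoly.monic (Algebra.IsIntegral.isIntegral (R := ℚ_[p]) x)
  rw [spectralNorm, spectralValue_le_one_iff hmonic]
  change IsIntegral ℤ_[p] x ↔ _
  constructor
  · intro h n
    rw [minpoly.isIntegrallyClosed_eq_field_fractions' ℚ_[p] h, coeff_map]
    exact ((minpoly ℤ_[p] x).coeff n).2
  · intro h
    have hlift : minpoly ℚ_[p] x ∈ lifts (algebraMap ℤ_[p] ℚ_[p]) :=
      (lifts_iff_coeff_lifts _).mpr fun n ↦ ⟨⟨_, h n⟩, rfl⟩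
    obtain ⟨q, hq, -, hmonic⟩ := lifts_and_natDegree_eq_and_monic hlift hmonic
    refine ⟨q, hmonic, ?_⟩
    rw [← aeval_def, ← aeval_map_algebraMap ℚ_[p], hq, minpoly.aeval]

-- Completeness of `ℚ_[p]` enters here, through the multiplicativity of the spectral norm.
variable {L} in
theorem mem_or_inv_mem_ringOfInt [Algebra.IsAlgebraic ℚ_[p] L] (x : L) :
    x ∈ ringOfInt p L ∨ x⁻¹ ∈ ringOfInt p L := by
  simp only [mem_ringOfInt_iff_spectralNorm_le_one]
  rcases eq_or_ne x 0 with rfl | hx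
  · simp [spectralNorm_zero]
  · have hmul : spectralNorm ℚ_[p] L x * spectralNorm ℚ_[p] L x⁻¹ = 1 := by
      rw [← spectralNorm_one (K := ℚ_[p]) (L := L), ← mul_inv_cancel₀ hx]
      exact (map_mul (spectralMulAlgNorm ℚ_[p] L) x x⁻¹).symm
    by_contra! hlt
    nlinarith [hlt.1, hlt.2]

instance [Algebra.IsAlgebraic ℚ_[p] L] : IsLocalRing (ringOfInt p L) :=
  inferInstanceAs (IsLocalRing
    { ringOfInt p L with mem_or_inv_mem' := mem_or_inv_mem_ringOfInt p : ValuationSubring L })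

instance [Algebra.IsAlgebraic ℚ_[p] L] : IsFractionRing (ringOfInt p L) L :=
  inferInstanceAs (IsFractionRing
    { ringOfInt p L with mem_or_inv_mem' := mem_or_inv_mem_ringOfInt p : ValuationSubring L } L)

theorem not_isUnit_natCast_ringOfInt : ¬ IsUnit (p : ringOfInt p L) := by
  have : FaithfulSMul ℤ_[p] (ringOfInt p L) :=
    (faithfulSMul_iff_algebraMap_injective _ _).mpr fun a b h ↦
      Subtype.val_injective <| (algebraMap ℚ_[p] L).injective <| congrArg Subtype.val h
  rw [← map_natCast (algebraMap ℤ_[p] (ringOfInt p L)), isUnit_map_iff]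
  exact PadicInt.p_nonunit

instance [FiniteDimensional ℚ_[p] L] : IsDiscreteValuationRing (ringOfInt p L) := by
  have hdedekind : IsDedekindDomain (ringOfInt p L) :=
    IsIntegralClosure.isDedekindDomain ℤ_[p] ℚ_[p] L (ringOfInt p L)
  have hfield : ¬ IsField (ringOfInt p L) := fun h ↦ not_isUnit_natCast_ringOfInt p L <|
    isUnit_iff_exists_inv.mpr <|
      h.mul_inv_cancel (Nat.cast_ne_zero.mpr (Fact.out : p.Prime).ne_zero)
  exact ((IsDiscreteValuationRing.TFAE _ hfield).out 0 2).mpr hdedekind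

theorem maxIdeal_eq_maximalIdeal [Algebra.IsAlgebraic ℚ_[p] L] :
    maxIdeal p L = maximalIdeal (ringOfInt p L) :=
  jacobson_eq_maximalIdeal ⊥ bot_ne_top

theorem span_natCast_eq_maximalIdeal_pow_eAbs [FiniteDimensional ℚ_[p] L] :
    Ideal.span {(p : ringOfInt p L)} = maximalIdeal (ringOfInt p L) ^ eAbs p L := by
  obtain ⟨e, he⟩ := exists_eq_maximalIdeal_pow <| mt Ideal.span_singleton_eq_bot.mp <|
    Nat.cast_ne_zero (R := ringOfInt p L).mpr (Fact.out : p.Prime).ne_zero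
  rw [eAbs, maxIdeal_eq_maximalIdeal, he]
  simp_rw [(maximalIdeal_pow_strictAnti (ringOfInt p L)).le_iff_ge]
  exact congrArg _ (csSup_Iic (a := e)).symm

theorem eAbs_pos [FiniteDimensional ℚ_[p] L] : 0 < eAbs p L := by
  refine Nat.pos_of_ne_zero fun h ↦ not_isUnit_natCast_ringOfInt p L ?_
  rw [← Ideal.span_singleton_eq_top, span_natCast_eq_maximalIdeal_pow_eAbs, h, pow_zero,
    Ideal.one_eq_top]

variable [Algebra K L] [IsScalarTower ℚ_[p] K L]

instance : IsScalarTower ℤ_[p] K L :=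
  .to₁₃₄ ℤ_[p] ℚ_[p] K L

noncomputable instance : Algebra (ringOfInt p K) (ringOfInt p L) :=
  ((IsScalarTower.toAlgHom ℤ_[p] K L).mapIntegralClosure).toRingHom.toAlgebra

instance : IsScalarTower (ringOfInt p K) (ringOfInt p L) L :=
  .of_algebraMap_eq fun _ ↦ rfl

instance : IsScalarTower ℤ_[p] (ringOfInt p K) L :=
  .of_algebraMap_eq fun x ↦ IsScalarTower.algebraMap_apply ℤ_[p] K L x

instance : IsIntegralClosure (ringOfInt p L) (ringOfInt p K) L :=
  .tower_top (R := ℤ_[p])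

instance : FaithfulSMul (ringOfInt p K) (ringOfInt p L) :=
  (faithfulSMul_iff_algebraMap_injective _ _).mpr fun _ _ h ↦
    Subtype.ext <| (algebraMap K L).injective (congrArg Subtype.val h)

instance [FiniteDimensional ℚ_[p] K] [FiniteDimensional K L] :
    Module.Finite (ringOfInt p K) (ringOfInt p L) :=
  have : CharZero K := charZero_of_injective_algebraMap (algebraMap ℚ_[p] K).injective
  IsIntegralClosure.finite (ringOfInt p K) K L (ringOfInt p L)

theorem eAbs_eq_ramificationIdx_mul [FiniteDimensional ℚ_[p] K] [FiniteDimensional ℚ_[p] L]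
    [FiniteDimensional K L] :
    eAbs p L = (maximalIdeal (ringOfInt p L)).ramificationIdx (ringOfInt p K) * eAbs p K := by
  refine (maximalIdeal_pow_strictAnti (ringOfInt p L)).injective ?_
  rw [pow_mul, ← map_maximalIdeal_eq_pow_ramificationIdx, ← Ideal.map_pow,
    ← span_natCast_eq_maximalIdeal_pow_eAbs, ← span_natCast_eq_maximalIdeal_pow_eAbs,
    Ideal.map_span, Set.image_singleton, map_natCast]

theorem isTotallyRamified_ringOfInt_iff [FiniteDimensional ℚ_[p] K] [FiniteDimensional ℚ_[p] L]
    [FiniteDimensional K L] :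
    IsTotallyRamified (ringOfInt p K) (ringOfInt p L) ↔
      eAbs p L = Module.finrank K L * eAbs p K := by
  rw [eAbs_eq_ramificationIdx_mul p K L, Nat.mul_left_inj (eAbs_pos p K).ne', IsTotallyRamified,
    IsFractionRing.finrank_eq (ringOfInt p K) K (ringOfInt p L) L]

noncomputable instance [FiniteDimensional ℚ_[p] K] [FiniteDimensional K L] :
    MulSemiringAction (L ≃ₐ[K] L) (ringOfInt p L) :=
  IsIntegralClosure.MulSemiringAction (ringOfInt p K) K L (ringOfInt p L)

instance [FiniteDimensional ℚ_[p] K] [FiniteDimensional ℚ_[p] L] [FiniteDimensional K L]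
    [IsGalois K L] : IsGaloisGroup (L ≃ₐ[K] L) (ringOfInt p K) (ringOfInt p L) :=
  .of_isFractionRing (L ≃ₐ[K] L) (ringOfInt p K) (ringOfInt p L) K L

theorem ramSet_eq_lowerRamificationGroup [FiniteDimensional ℚ_[p] K] [FiniteDimensional ℚ_[p] L]
    [FiniteDimensional K L] (i : ℕ) :
    ramSet p K L i = lowerRamificationGroup (L ≃ₐ[K] L) (ringOfInt p L) i := by
  ext σ
  rw [ramSet, Set.mem_ofPred_eq, maxIdeal_eq_maximalIdeal]
  refine forall_congr' fun x ↦ ?_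
  have hx : ((σ • x - x : ringOfInt p L) : L) = σ x - x :=
    congrArg (· - (x : L)) (algebraMap_galRestrict_apply (ringOfInt p K) σ x)
  constructor
  · rintro ⟨y, hy, h⟩
    rwa [← Subtype.ext (h.trans hx.symm)]
  · exact fun h ↦ ⟨_, h, hx⟩

variable {p K L} in
theorem HasUniqueRamJump.lowerRamificationGroup_eq_succ [FiniteDimensional ℚ_[p] K]
    [FiniteDimensional ℚ_[p] L] [FiniteDimensional K L] {t : ℕ} (ht : HasUniqueRamJump p K L t)
    (i : ℕ) (hi : i ≠ t) :
    lowerRamificationGroup (L ≃ₐ[K] L) (ringOfInt p L) i =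
      lowerRamificationGroup (L ≃ₐ[K] L) (ringOfInt p L) (i + 1) := by
  rw [← SetLike.coe_set_eq, ← ramSet_eq_lowerRamificationGroup, ← ramSet_eq_lowerRamificationGroup]
  exact not_not.mp fun hjump ↦ hi (ht.2 i hjump)

instance (E : Type*) [Field E] [Algebra ℚ_[p] E] [Algebra K E] [Algebra E L]
    [IsScalarTower ℚ_[p] K E] [IsScalarTower ℚ_[p] E L] [IsScalarTower K E L] :
    IsScalarTower (ringOfInt p K) (ringOfInt p E) (ringOfInt p L) :=
  .of_algebraMap_eq fun x ↦ Subtype.ext (IsScalarTower.algebraMap_apply K E L (x : K))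

end RingOfInt

theorem different_jump_relation_general {A B₁ B₂ C G₁ G₂ H₁ H₂ : Type*} [CommRing A] [IsDomain A]
    [IsDiscreteValuationRing A] [CommRing B₁] [IsDomain B₁] [IsDiscreteValuationRing B₁]
    [CommRing B₂] [IsDomain B₂] [IsDiscreteValuationRing B₂] [CommRing C] [IsDomain C]
    [IsDiscreteValuationRing C] [Algebra A B₁] [FaithfulSMul A B₁] [Module.Finite A B₁]
    [Algebra A B₂] [FaithfulSMul A B₂] [Module.Finite A B₂] [Algebra A C]
    [Algebra B₁ C] [FaithfulSMul B₁ C] [Module.Finite B₁ C] [Algebra B₂ C]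
    [FaithfulSMul B₂ C] [Module.Finite B₂ C] [IsScalarTower A B₁ C] [IsScalarTower A B₂ C]
    [Group G₁] [MulSemiringAction G₁ B₁] [IsGaloisGroup G₁ A B₁]
    [Group G₂] [MulSemiringAction G₂ B₂] [IsGaloisGroup G₂ A B₂]
    [Group H₁] [MulSemiringAction H₁ C] [IsGaloisGroup H₁ B₁ C]
    [Group H₂] [MulSemiringAction H₂ C] [IsGaloisGroup H₂ B₂ C]
    (h : IsTotallyRamified A C) {t₁ t₂ t₁' t₂' : ℕ}
    (ht₁ : ∀ i ≠ t₁, lowerRamificationGroup G₁ B₁ i = lowerRamificationGroup G₁ B₁ (i + 1))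
    (ht₂ : ∀ i ≠ t₂, lowerRamificationGroup G₂ B₂ i = lowerRamificationGroup G₂ B₂ (i + 1))
    (ht₁' : ∀ i ≠ t₁', lowerRamificationGroup H₂ C i = lowerRamificationGroup H₂ C (i + 1))
    (ht₂' : ∀ i ≠ t₂', lowerRamificationGroup H₁ C i = lowerRamificationGroup H₁ C (i + 1)) :
    Nat.card H₁ * (Nat.card G₁ - 1) * t₁ + (Nat.card H₁ - 1) * t₂' =
      Nat.card H₂ * (Nat.card G₂ - 1) * t₂ + (Nat.card H₂ - 1) * t₁' := by
  have : FaithfulSMul A C := .trans A B₁ C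
  have := IsGaloisGroup.finite (G := G₁) A B₁
  have := IsGaloisGroup.finite (G := G₂) A B₂
  have := IsGaloisGroup.finite (G := H₁) B₁ C
  have := IsGaloisGroup.finite (G := H₂) B₂ C
  have hdegree : Nat.card G₁ * Nat.card H₁ = Nat.card G₂ * Nat.card H₂ := by
    rw [IsGaloisGroup.card_eq_finrank' G₁ A B₁, IsGaloisGroup.card_eq_finrank' H₁ B₁ C,
      IsGaloisGroup.card_eq_finrank' G₂ A B₂, IsGaloisGroup.card_eq_finrank' H₂ B₂ C,
      Module.finrank_mul_finrank, Module.finrank_mul_finrank]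
  have hexponent := (maximalIdeal_pow_strictAnti C).injective <|
    (h.differentIdeal_eq_pow_of_tower ht₁ ht₂').symm.trans
      (h.differentIdeal_eq_pow_of_tower ht₂ ht₁')
  -- The exponents exceed the two sides of the claim by `[C : A] - 1`.
  obtain ⟨g₁, hg₁⟩ := Nat.exists_eq_add_one.mpr (Nat.card_pos (α := G₁))
  obtain ⟨g₂, hg₂⟩ := Nat.exists_eq_add_one.mpr (Nat.card_pos (α := G₂))
  obtain ⟨k₁, hk₁⟩ := Nat.exists_eq_add_one.mpr (Nat.card_pos (α := H₁))
  obtain ⟨k₂, hk₂⟩ := Nat.exists_eq_add_one.mpr (Nat.card_pos (α := H₂))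
  simp only [hg₁, hg₂, hk₁, hk₂, Nat.add_sub_cancel] at hdegree hexponent ⊢
  linarith

/-- Let `K₁, K₂` be `p`-adic local fields with `K = K₁ ∩ K₂`, `K₁/K` and `K₂/K` Galois,
`K₁K₂/K` totally ramified, and suppose `K₁/K`, `K₂/K`, `K₁K₂/K₂`, `K₁K₂/K₁` have unique
ramification jumps `t₁, t₂, t₁', t₂'` respectively.  With `dᵢ = [Kᵢ : K]` one has
`d₂(d₁-1)t₁ + (d₂-1)t₂' = d₁(d₂-1)t₂ + (d₁-1)t₁'`. -/
theorem different_jump_relation (p : ℕ) [Fact p.Prime] (K M : Type*) [Field K] [Field M]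
    [Algebra ℚ_[p] K] [Algebra ℚ_[p] M] [Algebra K M] [IsScalarTower ℚ_[p] K M]
    [FiniteDimensional ℚ_[p] M]
    (E₁ E₂ : IntermediateField K M)
    (hinf : E₁ ⊓ E₂ = ⊥) (hsup : E₁ ⊔ E₂ = ⊤)
    [IsGalois K ↥E₁] [IsGalois K ↥E₂]
    (htotram : eAbs p M = Module.finrank K M * eAbs p K)
    (d₁ d₂ : ℕ) (hd₁ : Module.finrank K ↥E₁ = d₁) (hd₂ : Module.finrank K ↥E₂ = d₂)
    (t₁ t₂ t₁' t₂' : ℕ)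
    (ht₁ : HasUniqueRamJump p K ↥E₁ t₁) (ht₂ : HasUniqueRamJump p K ↥E₂ t₂)
    (ht₁' : HasUniqueRamJump p ↥E₂ M t₁') (ht₂' : HasUniqueRamJump p ↥E₁ M t₂') :
    d₂ * (d₁ - 1) * t₁ + (d₂ - 1) * t₂' = d₁ * (d₂ - 1) * t₂ + (d₁ - 1) * t₁' := by
  have : FiniteDimensional K M := .right ℚ_[p] K M
  have : FiniteDimensional ℚ_[p] K := .left ℚ_[p] K M
  have (E : IntermediateField K M) : IsScalarTower ℚ_[p] E M := .of_algebraMap_eq fun _ ↦ rfl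
  have (E : IntermediateField K M) : FiniteDimensional ℚ_[p] E := .left ℚ_[p] E M
  have : IsGalois K M := by
    rw [← isGalois_iff_isGalois_top, ← hsup]
    infer_instance
  have hdisjoint : E₁.LinearDisjoint E₂ := .of_inf_eq_bot hinf
  have hrelation := different_jump_relation_general
    ((isTotallyRamified_ringOfInt_iff p K M).mpr htotram)
    ht₁.lowerRamificationGroup_eq_succ ht₂.lowerRamificationGroup_eq_succ
    ht₁'.lowerRamificationGroup_eq_succ ht₂'.lowerRamificationGroup_eq_succ
  rwa [IsGalois.card_aut_eq_finrank, IsGalois.card_aut_eq_finrank, IsGalois.card_aut_eq_finrank,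
    IsGalois.card_aut_eq_finrank, hdisjoint.finrank_left_eq_finrank hsup,
    hdisjoint.finrank_right_eq_finrank hsup, hd₁, hd₂] at hrelation
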